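/- Every conductor submonoid H of a factorial monoid F has catenary degree at most 3; consequently every set of lengths 𝖫(a), a ∈ H, is an interval of integers. -/

import Mathlib

def IsPrimeElem {F : Type*} [CancelCommMonoid F] (p : F) : Prop :=
  ¬ IsUnit p ∧ ∀ a b : F, p ∣ a * b → p ∣ a ∨ p ∣ b

def IsFactorialMonoid (F : Type*) [CancelCommMonoid F] : Prop :=
  ∀ a : F, ∃ (u : F) (l : Multiset F), IsUnit u ∧ (∀ p ∈ l, IsPrimeElem p) ∧ a = u * l.prod

/-- `a` is an invertible element of the submonoid `H`, i.e. `a ∈ H^×`. -/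
def IsUnitIn {F : Type*} [CancelCommMonoid F] (H : Submonoid F) (a : F) : Prop :=
  a ∈ H ∧ ∃ b ∈ H, a * b = 1

/-- `H` is a conductor submonoid of `F`: `H ≠ H^×` and `H \ H^×` is an s-ideal of `F`. -/
def IsConductorSubmonoid {F : Type*} [CancelCommMonoid F] (H : Submonoid F) : Prop :=
  (∃ a ∈ H, ¬ IsUnitIn H a) ∧
  ∀ a ∈ H, ¬ IsUnitIn H a → ∀ y : F, a * y ∈ H ∧ ¬ IsUnitIn H (a * y)

/-- `a` is an atom of the submonoid `H`. -/
def IsAtomIn {F : Type*} [CancelCommMonoid F] (H : Submonoid F) (a : F) : Prop :=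
  a ∈ H ∧ ¬ IsUnitIn H a ∧
    ∀ b c : F, b ∈ H → c ∈ H → a = b * c → IsUnitIn H b ∨ IsUnitIn H c


/-- The set of factorizations of `a` into atoms of `H` (as multisets of atoms). -/
def FactorizationsOf {F : Type*} [CancelCommMonoid F] (H : Submonoid F) (a : F) :
    Set (Multiset F) :=
  {l | (∀ u ∈ l, IsAtomIn H u) ∧ l.prod = a}

/-- The distance between two factorizations: cancel the common part and take the maximum
of the remaining lengths. -/
def factDist {F : Type*} [CancelCommMonoid F] [DecidableEq F]
    (z z' : Multiset F) : ℕ :=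
  max (Multiset.card (z - z')) (Multiset.card (z' - z))

/-- The set of lengths of `a`. -/
def LengthSetOf {F : Type*} [CancelCommMonoid F] (H : Submonoid F) (a : F) : Set ℕ :=
  {n | ∃ l ∈ FactorizationsOf H a, Multiset.card l = n}


section Aux

variable {F : Type*} [CancelCommMonoid F]

/-- Riesz refinement for factorial monoids. -/
lemma aux_refine (hF : IsFactorialMonoid F) (x y z w : F) (h : x * y = z * w) :
    ∃ a b c d : F, x = a * b ∧ y = c * d ∧ z = a * c ∧ w = b * d := by
  obtain ⟨u, l, hu, hl, rfl⟩ := hF x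
  induction l using Multiset.induction_on generalizing z w with
  | empty =>
    obtain ⟨e, rfl⟩ := hu
    refine ⟨e, 1, ((e⁻¹ : Fˣ) : F) * z, w, by simp, ?_, by simp, by simp⟩
    rw [mul_assoc, ← h]; simp
  | cons p l ih =>
    have hp := hl p (by simp)
    have hl' : ∀ q ∈ l, IsPrimeElem q := fun q hq => hl q (by simp [hq])
    rw [Multiset.prod_cons] at h ⊢
    have hd : p ∣ z * w := by
      rw [← h]
      exact ⟨u * l.prod * y, by ac_rfl⟩
    rcases hp.2 z w hd with ⟨z', rfl⟩ | ⟨w', rfl⟩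
    · have : u * l.prod * y = z' * w := by
        apply mul_left_cancel (a := p)
        calc _ = u * (p * l.prod) * y := by ac_rfl
          _ = _ := by rw [h]; ac_rfl
      obtain ⟨a, b, c, d, h1, h2, h3, h4⟩ := ih z' w hl' this
      refine ⟨p * a, b, c, d, ?_, h2, ?_, h4⟩
      · calc _ = p * (u * l.prod) := by ac_rfl
          _ = _ := by rw [h1]; ac_rfl
      · rw [h3]; ac_rfl
    · have : u * l.prod * y = z * w' := by
        apply mul_left_cancel (a := p)
        calc _ = u * (p * l.prod) * y := by ac_rfl
          _ = _ := by rw [h]; ac_rfl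
      obtain ⟨a, b, c, d, h1, h2, h3, h4⟩ := ih z w' hl' this
      refine ⟨a, p * b, c, d, ?_, h2, h3, ?_⟩
      · calc _ = p * (u * l.prod) := by ac_rfl
          _ = _ := by rw [h1]; ac_rfl
      · rw [h4]; ac_rfl

/-- splitting of prime factorizations along a product -/
lemma aux_split (l : Multiset F) (hl : ∀ p ∈ l, IsPrimeElem p) (u b c : F) (hu : IsUnit u)
    (h : u * l.prod = b * c) :
    ∃ (u1 u2 : F) (l1 l2 : Multiset F), IsUnit u1 ∧ IsUnit u2 ∧ l = l1 + l2 ∧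
      b = u1 * l1.prod ∧ c = u2 * l2.prod := by
  induction l using Multiset.induction_on generalizing b c with
  | empty =>
    simp only [Multiset.prod_zero, mul_one] at h
    rw [h] at hu
    exact ⟨b, c, 0, 0, isUnit_of_mul_isUnit_left hu, isUnit_of_mul_isUnit_right hu, by simp,
      by simp, by simp⟩
  | cons p l ih =>
    have hp := hl p (by simp)
    have hl' : ∀ q ∈ l, IsPrimeElem q := fun q hq => hl q (by simp [hq])
    rw [Multiset.prod_cons] at h
    have hd : p ∣ b * c := by
      rw [← h]
      exact ⟨u * l.prod, by ac_rfl⟩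
    rcases hp.2 b c hd with ⟨b', rfl⟩ | ⟨c', rfl⟩
    · have : u * l.prod = b' * c := by
        apply mul_left_cancel (a := p)
        calc _ = u * (p * l.prod) := by ac_rfl
          _ = _ := by rw [h]; ac_rfl
      obtain ⟨u1, u2, l1, l2, h1, h2, h3, h4, h5⟩ := ih hl' b' c this
      refine ⟨u1, u2, p ::ₘ l1, l2, h1, h2, by simp [h3], ?_, h5⟩
      rw [h4, Multiset.prod_cons]; ac_rfl
    · have : u * l.prod = b * c' := by
        apply mul_left_cancel (a := p)
        calc _ = u * (p * l.prod) := by ac_rfl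
          _ = _ := by rw [h]; ac_rfl
      obtain ⟨u1, u2, l1, l2, h1, h2, h3, h4, h5⟩ := ih hl' b c' this
      refine ⟨u1, u2, l1, p ::ₘ l2, h1, h2, by simp [h3], h4, ?_⟩
      rw [h5, Multiset.prod_cons]; ac_rfl

lemma aux_len (hF : IsFactorialMonoid F) :
    ∃ f : F → ℕ, ∀ b c : F, ¬ IsUnit c → f b < f (b * c) := by
  classical
  have hex : ∀ a : F, ∃ n : ℕ, ∃ (u : F) (l : Multiset F), IsUnit u ∧
      (∀ p ∈ l, IsPrimeElem p) ∧ a = u * l.prod ∧ l.card = n := by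
    intro a
    obtain ⟨u, l, h1, h2, h3⟩ := hF a
    exact ⟨_, u, l, h1, h2, h3, rfl⟩
  refine ⟨fun a => Nat.find (hex a), fun b c hc => ?_⟩
  obtain ⟨u, l, h1, h2, h3, h4⟩ := Nat.find_spec (hex (b * c))
  obtain ⟨u1, u2, l1, l2, k1, k2, k3, k4, k5⟩ := aux_split l h2 u b c h1 h3.symm
  have hb : Nat.find (hex b) ≤ l1.card :=
    Nat.find_min' (hex b) ⟨u1, l1, k1, fun p hp => h2 p (by simp [k3, hp]), k4, rfl⟩
  have : 0 < l2.card := by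
    rw [Multiset.card_pos]
    rintro rfl
    apply hc
    rw [k5]; simpa using k2
  have h5 : l.card = l1.card + l2.card := by rw [k3]; simp
  show Nat.find (hex b) < Nat.find (hex (b * c))
  omega

/-- nonunits of `H` -/
def AuxI (H : Submonoid F) (x : F) : Prop := x ∈ H ∧ ¬ IsUnitIn H x

lemma auxI_mul {H : Submonoid F} (hH : IsConductorSubmonoid H) {x : F} (hx : AuxI H x) (y : F) :
    AuxI H (x * y) := hH.2 x hx.1 hx.2 y

lemma auxI_mul' {H : Submonoid F} (hH : IsConductorSubmonoid H) {x : F} (hx : AuxI H x) (y : F) :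
    AuxI H (y * x) := by rw [mul_comm]; exact auxI_mul hH hx y

lemma auxI_dvd {H : Submonoid F} (hH : IsConductorSubmonoid H) {x y : F} (hx : AuxI H x)
    (h : x ∣ y) : AuxI H y := by
  obtain ⟨c, rfl⟩ := h
  exact auxI_mul hH hx c

lemma auxI_nonunit {H : Submonoid F} (hH : IsConductorSubmonoid H) {x : F} (hx : AuxI H x) :
    ¬ IsUnit x := by
  intro hu
  have := auxI_dvd hH hx hu.dvd (y := 1)
  exact this.2 ⟨H.one_mem, 1, H.one_mem, by simp⟩

lemma aux_atom_iff {H : Submonoid F} {x : F} :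
    IsAtomIn H x ↔ AuxI H x ∧ ∀ b c, AuxI H b → AuxI H c → x ≠ b * c := by
  constructor
  · rintro ⟨h1, h2, h3⟩
    refine ⟨⟨h1, h2⟩, fun b c hb hc h => ?_⟩
    rcases h3 b c hb.1 hc.1 h with h | h
    · exact hb.2 h
    · exact hc.2 h
  · rintro ⟨⟨h1, h2⟩, h3⟩
    refine ⟨h1, h2, fun b c hb hc h => ?_⟩
    by_contra hcon
    push Not at hcon
    exact h3 b c ⟨hb, hcon.1⟩ ⟨hc, hcon.2⟩ h

lemma IsAtomIn.auxI {H : Submonoid F} {x : F} (h : IsAtomIn H x) : AuxI H x := ⟨h.1, h.2.1⟩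

lemma aux_atom_dvd {H : Submonoid F} (hH : IsConductorSubmonoid H) {u x : F} (hu : IsAtomIn H u)
    (hx : AuxI H x) (h : x ∣ u) : IsAtomIn H x := by
  rw [aux_atom_iff] at hu ⊢
  refine ⟨hx, fun b c hb hc hbc => ?_⟩
  obtain ⟨d, rfl⟩ := h
  exact hu.2 b (c * d) hb (auxI_mul hH hc d) (by rw [hbc, mul_assoc])

lemma aux_atom_unit {H : Submonoid F} (hH : IsConductorSubmonoid H) {u e : F} (hu : IsAtomIn H u)
    (he : IsUnit e) : IsAtomIn H (u * e) := by
  refine aux_atom_dvd hH hu (auxI_mul hH hu.auxI e) ?_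
  exact (he.mul_right_dvd).2 dvd_rfl

/-- an atom times a prime is an atom or a product of two atoms, one dividing the old one -/
lemma aux_atom_prime {H : Submonoid F} (hH : IsConductorSubmonoid H) {u p : F}
    (hu : IsAtomIn H u) (hp : IsPrimeElem p) :
    IsAtomIn H (u * p) ∨ ∃ b c, IsAtomIn H b ∧ IsAtomIn H c ∧ u * p = b * c ∧ c ∣ u := by
  by_cases hat : IsAtomIn H (u * p)
  · exact Or.inl hat
  right
  have key : ∀ b c, AuxI H b → AuxI H c → u * p = b * c → p ∣ b →
      IsAtomIn H b ∧ IsAtomIn H c ∧ c ∣ u := by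
    rintro _ c hb hc h ⟨b', rfl⟩
    have hu' : u = b' * c := by
      apply mul_left_cancel (a := p)
      rw [mul_comm, h, mul_assoc]
    have hcu : c ∣ u := ⟨b', by rw [hu', mul_comm]⟩
    have hcat := aux_atom_dvd hH hu hc hcu
    have hb' : ¬ AuxI H b' := fun hI => (aux_atom_iff.1 hu).2 _ _ hI hc hu'
    refine ⟨aux_atom_iff.2 ⟨hb, fun d e hd he hde => ?_⟩, hcat, hcu⟩
    rcases hp.2 d e ⟨b', hde.symm⟩ with ⟨d', rfl⟩ | ⟨e', rfl⟩
    · apply hb'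
      have : b' = d' * e := by
        apply mul_left_cancel (a := p)
        rw [hde, mul_assoc]
      rw [this]; exact auxI_mul' hH he _
    · apply hb'
      have : b' = d * e' := by
        apply mul_left_cancel (a := p)
        rw [hde]; ac_rfl
      rw [this]; exact auxI_mul hH hd _
  have : ∃ b c, AuxI H b ∧ AuxI H c ∧ u * p = b * c := by
    by_contra hcon
    push Not at hcon
    exact hat (aux_atom_iff.2 ⟨auxI_mul hH hu.auxI p, hcon⟩)
  obtain ⟨b, c, hb, hc, h⟩ := this
  rcases hp.2 b c ⟨u, by rw [← h, mul_comm]⟩ with hd | hd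
  · obtain ⟨h1, h2, h3⟩ := key b c hb hc h hd
    exact ⟨b, c, h1, h2, h, h3⟩
  · obtain ⟨h1, h2, h3⟩ := key c b hc hb (by rw [h, mul_comm]) hd
    exact ⟨c, b, h1, h2, by rw [h, mul_comm], h3⟩

lemma aux_exists_fact (hF : IsFactorialMonoid F) {H : Submonoid F} (hH : IsConductorSubmonoid H)
    (x : F) (hx : AuxI H x) : ∃ v r, (v ::ₘ r) ∈ FactorizationsOf H x := by
  obtain ⟨f, hf⟩ := aux_len hF
  induction hn : f x using Nat.strong_induction_on generalizing x with
  | _ n ih =>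
    by_cases hat : IsAtomIn H x
    · exact ⟨x, 0, by intro u hu; simp at hu; rwa [hu], by simp⟩
    have : ∃ b c, AuxI H b ∧ AuxI H c ∧ x = b * c := by
      by_contra hcon
      push Not at hcon
      exact hat (aux_atom_iff.2 ⟨hx, hcon⟩)
    obtain ⟨b, c, hb, hc, rfl⟩ := this
    obtain ⟨v, r, h1, h2⟩ := ih (f b) (hn ▸ hf b c (auxI_nonunit hH hc)) b hb rfl
    obtain ⟨v', r', h1', h2'⟩ := ih (f c)
      (by rw [← hn, mul_comm b c]; exact hf c b (auxI_nonunit hH hb)) c hc rfl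
    refine ⟨v, r + v' ::ₘ r', ?_, ?_⟩
    · intro u hu
      rw [← Multiset.cons_add, Multiset.mem_add] at hu
      exact hu.elim (h1 u) (h1' u)
    · rw [← Multiset.cons_add, Multiset.prod_add, h2, h2']

lemma aux_fact_cons {H : Submonoid F} {u a : F} {z : Multiset F} (hu : IsAtomIn H u)
    (hz : z ∈ FactorizationsOf H a) : (u ::ₘ z) ∈ FactorizationsOf H (u * a) := by
  refine ⟨fun w hw => ?_, by rw [Multiset.prod_cons, hz.2]⟩
  rcases Multiset.mem_cons.1 hw with rfl | hw
  · exact hu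
  · exact hz.1 w hw

lemma aux_fact_add {H : Submonoid F} {a b : F} {y z : Multiset F}
    (hy : y ∈ FactorizationsOf H a)
    (hz : z ∈ FactorizationsOf H b) : (y + z) ∈ FactorizationsOf H (a * b) := by
  refine ⟨fun w hw => ?_, by rw [Multiset.prod_add, hy.2, hz.2]⟩
  rcases Multiset.mem_add.1 hw with hw | hw
  · exact hy.1 w hw
  · exact hz.1 w hw

lemma aux_fact_prime {H : Submonoid F} (hH : IsConductorSubmonoid H) {u p : F}
    (hu : IsAtomIn H u) (hp : IsPrimeElem p) :
    ∃ s ∈ FactorizationsOf H (u * p), s.card ≤ 2 := by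
  rcases aux_atom_prime hH hu hp with h | ⟨b, c, hb, hc, h, -⟩
  · exact ⟨{u * p}, ⟨by intro w hw; simp at hw; rwa [hw], by simp⟩, by simp⟩
  · refine ⟨{b, c}, ⟨?_, by simp [h]⟩, by simp⟩
    intro w hw
    simp at hw
    rcases hw with rfl | rfl <;> assumption

/-- the combinatorial core -/
lemma aux_core (hF : IsFactorialMonoid F) {H : Submonoid F} (hH : IsConductorSubmonoid H)
    (a : F) (G D : F → Prop) (hGI : ∀ x, G x → AuxI H x)
    (P1 : ∀ x y, AuxI H x → G y → x * y ∣ a → G x)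
    (P2 : ∀ x y, G x → D y → ¬ x * y ∣ a)
    (u1 u2 v1 v2 : F) (hu : u1 * u2 = a) (hv : v1 * v2 = a) (hu1 : G u1) (hu2 : G u2)
    (hv1 : D v1) (hv2 : D v2) (hGm : ∀ x y, G x → G (x * y)) :
    ∃ S T, IsAtomIn H S ∧ IsAtomIn H T ∧ S * T = a ∧ G S := by
  obtain ⟨f, hf⟩ := aux_len hF
  have hex : ∃ n : ℕ, ∃ m11 m12 m13 m21 m22 m23 : F, v1 = m11 * m12 * m13 ∧ 
      v2 = m21 * m22 * m23 ∧ G (m11 * m21) ∧ G (m12 * m22) ∧ f (m11 * m22) = n := by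
    obtain ⟨p, q, r, s, h1, h2, h3, h4⟩ := aux_refine hF v1 v2 u1 u2 (by rw [hu, hv])
    exact ⟨_, p, q, 1, r, s, 1, by simpa using h1, by simpa using h2, by rwa [← h3],
      by rwa [← h4], rfl⟩
  classical
  obtain ⟨m11, m12, m13, m21, m22, m23, h1, h2, h3, h4, h5⟩ := Nat.find_spec hex
  have hmin : ∀ x11 x12 x13 x21 x22 x23 : F, v1 = x11 * x12 * x13 → 
      v2 = x21 * x22 * x23 → G (x11 * x21) → G (x12 * x22) →
      f (m11 * m22) ≤ f (x11 * x22) := by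
    intro x11 x12 x13 x21 x22 x23 k1 k2 k3 k4
    rw [h5]
    exact Nat.find_min' hex ⟨x11, x12, x13, x21, x22, x23, k1, k2, k3, k4, rfl⟩
  have hST : (m11 * (m21 * m23)) * (m22 * (m12 * m13)) = a := by
    rw [← hv, h1, h2]; ac_rfl
  refine ⟨m11 * (m21 * m23), m22 * (m12 * m13), ?_, ?_, hST, ?_⟩
  · refine aux_atom_iff.2 ⟨auxI_dvd hH (hGI _ h3) ⟨m23, by ac_rfl⟩, fun c d hc hd hcd => ?_⟩
    have hGc : G c := P1 c _ hc h4 ⟨d * m13, by rw [← hST, hcd]; ac_rfl⟩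
    have hGd : G d := P1 d _ hd h4 ⟨c * m13, by rw [← hST, hcd]; ac_rfl⟩
    obtain ⟨c1, d1, c2, d2, e1, e2, e3, e4⟩ := aux_refine hF _ _ _ _ hcd
    have hd1 : ¬ IsUnit d1 := by
      intro hunit
      apply P2 d v1 hGd hv1
      have : d ∣ d2 := by rw [e4]; exact (hunit.mul_left_dvd).2 dvd_rfl
      refine (mul_dvd_mul this (dvd_refl v1)).trans ⟨c2 * m22, ?_⟩
      rw [← hv, h2]
      calc _ = v1 * ((m21 * m23) * m22) := by ac_rfl
        _ = _ := by rw [e2]; ac_rfl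
    have := hmin c1 m12 (d1 * m13) c2 m22 d2 (by rw [h1, e1]; ac_rfl)
      (by
        rw [h2]
        calc _ = (m21 * m23) * m22 := by ac_rfl
          _ = _ := by rw [e2]; ac_rfl) (by rwa [← e3]) h4
    have h6 := hf (c1 * m22) d1 hd1
    have h7 : m11 * m22 = c1 * m22 * d1 := by rw [e1]; ac_rfl
    rw [h7] at this
    omega
  · refine aux_atom_iff.2 ⟨auxI_dvd hH (hGI _ h4) ⟨m13, by ac_rfl⟩, fun c d hc hd hcd => ?_⟩
    have hGc : G c := P1 c _ hc h3 ⟨d * m23, by rw [← hST, hcd]; ac_rfl⟩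
    have hGd : G d := P1 d _ hd h3 ⟨c * m23, by rw [← hST, hcd]; ac_rfl⟩
    obtain ⟨c1, d1, c2, d2, e1, e2, e3, e4⟩ := aux_refine hF _ _ _ _ hcd
    have hd1 : ¬ IsUnit d1 := by
      intro hunit
      apply P2 d v2 hGd hv2
      have : d ∣ d2 := by rw [e4]; exact (hunit.mul_left_dvd).2 dvd_rfl
      refine (mul_dvd_mul this (dvd_refl v2)).trans ⟨c2 * m11, ?_⟩
      rw [← hv, h1]
      calc _ = v2 * ((m12 * m13) * m11) := by ac_rfl
        _ = _ := by rw [e2]; ac_rfl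
    have := hmin m11 c2 d2 m21 c1 (d1 * m23)
      (by
        rw [h1]
        calc _ = (m12 * m13) * m11 := by ac_rfl
          _ = _ := by rw [e2]; ac_rfl) (by rw [h2, e1]; ac_rfl) h3
      (by rw [mul_comm, ← e3]; exact hGc)
    have h6 := hf (m11 * c1) d1 hd1
    have h7 : m11 * m22 = m11 * c1 * d1 := by rw [e1]; ac_rfl
    rw [h7] at this
    omega
  · rw [← mul_assoc]; exact hGm _ _ h3

end Aux

section AuxConn

variable {F : Type*} [CancelCommMonoid F] [DecidableEq F]

lemma aux_dist_comm (z z' : Multiset F) : factDist z z' = factDist z' z := max_comm _ _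

lemma aux_dist_add (s t r : Multiset F) : factDist (s + r) (t + r) = factDist s t := by
  unfold factDist
  rw [add_tsub_add_eq_tsub_right, add_tsub_add_eq_tsub_right]

lemma aux_dist_le (s t : Multiset F) (n : ℕ) (hs : s.card ≤ n) (ht : t.card ≤ n) :
    factDist s t ≤ n := by
  unfold factDist
  apply max_le
  · exact (Multiset.card_le_card (Multiset.sub_le_self s t)).trans hs
  · exact (Multiset.card_le_card (Multiset.sub_le_self t s)).trans ht

def AuxStep (H : Submonoid F) (a : F) (z z' : Multiset F) : Prop :=
  z ∈ FactorizationsOf H a ∧ z' ∈ FactorizationsOf H a ∧ factDist z z' ≤ 3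

def AuxConn (H : Submonoid F) (a : F) : Multiset F → Multiset F → Prop :=
  Relation.ReflTransGen (AuxStep H a)

lemma AuxConn.symm' {H : Submonoid F} {a : F} {z z' : Multiset F} (h : AuxConn H a z z') :
    AuxConn H a z' z := by
  induction h with
  | refl => exact Relation.ReflTransGen.refl
  | tail _ hstep ih =>
    exact Relation.ReflTransGen.head ⟨hstep.2.1, hstep.1, by rw [aux_dist_comm]; exact hstep.2.2⟩ ih

lemma aux_conn_cons {H : Submonoid F} {a u : F} {z z' : Multiset F} (hu : IsAtomIn H u)
    (h : AuxConn H a z z') : AuxConn H (u * a) (u ::ₘ z) (u ::ₘ z') := by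
  induction h with
  | refl => exact Relation.ReflTransGen.refl
  | @tail x y _ hstep ih =>
    obtain ⟨h1, h2, h3⟩ := hstep
    refine ih.tail ⟨aux_fact_cons hu h1, aux_fact_cons hu h2, ?_⟩
    rw [← Multiset.singleton_add, ← Multiset.singleton_add, add_comm _ x, add_comm _ y,
      aux_dist_add]
    exact h3

/-- `w` occurs as an atom in a factorization of `a` (of length at least 2) connected to `z` -/
def AuxG (H : Submonoid F) (a : F) (z : Multiset F) (w : F) : Prop :=
  IsAtomIn H w ∧ (∃ y, AuxI H y ∧ w * y = a) ∧
    ∃ z1 ∈ FactorizationsOf H a, w ∈ z1 ∧ AuxConn H a z z1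

/-- factorizations with a common atom are connected -/
def AuxIH (H : Submonoid F) (a : F) : Prop :=
  ∀ u z z', z ∈ FactorizationsOf H a → z' ∈ FactorizationsOf H a → u ∈ z → u ∈ z' →
    AuxConn H a z z'

lemma auxG_conn {H : Submonoid F} {a : F} (ih : AuxIH H a) {z z1 : Multiset F} {w : F}
    (h : AuxG H a z w) (hz1 : z1 ∈ FactorizationsOf H a) (hw : w ∈ z1) : AuxConn H a z z1 := by
  obtain ⟨-, -, z2, h2, h3, h4⟩ := h
  exact h4.trans (ih w _ _ h2 hz1 h3 hw)

lemma auxG_prime (hF : IsFactorialMonoid F) {H : Submonoid F} (hH : IsConductorSubmonoid H)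
    {a : F} (ih : AuxIH H a) {z : Multiset F} {w p : F} (hp : IsPrimeElem p) (hw : AuxI H w)
    (h : AuxG H a z (w * p)) : AuxG H a z w := by
  have hat : IsAtomIn H w := aux_atom_dvd hH h.1 hw ⟨p, rfl⟩
  obtain ⟨y, hy, hya⟩ := h.2.1
  refine ⟨hat, ⟨p * y, auxI_mul' hH hy p, by rw [← hya]; ac_rfl⟩, ?_⟩
  obtain ⟨v, r, hvr⟩ := aux_exists_fact hF hH y hy
  have hv : IsAtomIn H v := hvr.1 v (by simp)
  have hvp : v * r.prod = y := by rw [← hvr.2, Multiset.prod_cons]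
  obtain ⟨s, hs, hsc⟩ := aux_fact_prime hH hv hp
  have hr : r ∈ FactorizationsOf H r.prod := ⟨fun x hx => hvr.1 x (by simp [hx]), rfl⟩
  have hz1 : ((w * p) ::ₘ (v ::ₘ r)) ∈ FactorizationsOf H a := by
    rw [← hya]; exact aux_fact_cons h.1 hvr
  have hz2 : (w ::ₘ (s + r)) ∈ FactorizationsOf H a := by
    have := aux_fact_cons hat (aux_fact_add hs hr)
    have e : w * (v * p * r.prod) = a := by rw [← hya, ← hvp]; ac_rfl
    rwa [e] at this
  refine ⟨_, hz2, by simp, (auxG_conn ih h hz1 (by simp)).tail ⟨hz1, hz2, ?_⟩⟩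
  have e1 : ((w * p) ::ₘ (v ::ₘ r)) = {w * p, v} + r := by
    simp [← Multiset.singleton_add, add_assoc]
  have e2 : (w ::ₘ (s + r)) = (w ::ₘ s) + r := by simp
  rw [e1, e2, aux_dist_add]
  apply aux_dist_le
  · simp
  · simp; omega

lemma auxG_unit (hF : IsFactorialMonoid F) {H : Submonoid F} (hH : IsConductorSubmonoid H)
    {a : F} {z : Multiset F} (ih : AuxIH H a) {w x e : F} (he : IsUnit e)
    (h : AuxG H a z w) (hx : IsAtomIn H x) (ha : w * x * e = a) : AuxG H a z x := by
  refine ⟨hx, ⟨w * e, auxI_mul hH h.1.auxI e, by rw [← ha]; ac_rfl⟩, ?_⟩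
  have h1 : ({w, x * e} : Multiset F) ∈ FactorizationsOf H a := by
    refine ⟨?_, by simp [← ha, mul_assoc]⟩
    intro t ht
    simp at ht
    rcases ht with rfl | rfl
    · exact h.1
    · exact aux_atom_unit hH hx he
  have h2 : ({w * e, x} : Multiset F) ∈ FactorizationsOf H a := by
    refine ⟨?_, by simp [← ha]; ac_rfl⟩
    intro t ht
    simp at ht
    rcases ht with rfl | rfl
    · exact aux_atom_unit hH h.1 he
    · exact hx
  refine ⟨_, h2, by simp, (auxG_conn ih h h1 (by simp)).tail ⟨h1, h2, ?_⟩⟩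
  apply aux_dist_le <;> simp

/-- unit multiples -/
lemma auxG_unit' (hF : IsFactorialMonoid F) {H : Submonoid F} (hH : IsConductorSubmonoid H)
    {a : F} {z : Multiset F} (ih : AuxIH H a) {w e : F} (he : IsUnit e)
    (h : AuxG H a z (w * e)) : AuxG H a z w := by
  obtain ⟨e, rfl⟩ := he
  have hw : IsAtomIn H w := by
    have := aux_atom_unit hH h.1 (e⁻¹).isUnit
    simpa using this
  obtain ⟨y, hy, hya⟩ := h.2.1
  obtain ⟨v, r, hvr⟩ := aux_exists_fact hF hH y hy
  have hv : IsAtomIn H v := hvr.1 v (by simp)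
  have hr : r ∈ FactorizationsOf H r.prod := ⟨fun x hx => hvr.1 x (by simp [hx]), rfl⟩
  have hvp : v * r.prod = y := by rw [← hvr.2, Multiset.prod_cons]
  have hz1 : ((w * e) ::ₘ (v ::ₘ r)) ∈ FactorizationsOf H a := by
    rw [← hya]; exact aux_fact_cons h.1 hvr
  have hz2 : (w ::ₘ ((v * e) ::ₘ r)) ∈ FactorizationsOf H a := by
    have := aux_fact_cons hw (aux_fact_cons (aux_atom_unit hH hv e.isUnit) hr)
    have e : w * (v * e * r.prod) = a := by rw [← hya, ← hvp]; ac_rfl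
    rwa [e] at this
  refine ⟨hw, ⟨e * y, auxI_mul' hH hy _, by rw [← hya]; ac_rfl⟩, _, hz2, by simp,
    (auxG_conn ih h hz1 (by simp)).tail ⟨hz1, hz2, ?_⟩⟩
  have e1 : ((w * e) ::ₘ (v ::ₘ r)) = {w * (e : F), v} + r := by
    simp [← Multiset.singleton_add, add_assoc]
  have e2 : (w ::ₘ ((v * e) ::ₘ r)) = {w, v * (e : F)} + r := by
    simp [← Multiset.singleton_add, add_assoc]
  rw [e1, e2, aux_dist_add]
  apply aux_dist_le <;> simp

lemma auxG_dvd (hF : IsFactorialMonoid F) {H : Submonoid F} (hH : IsConductorSubmonoid H)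
    {a : F} {z : Multiset F} (ih : AuxIH H a) {w u : F} (hw : AuxI H w)
    (h : AuxG H a z u) (hd : w ∣ u) : AuxG H a z w := by
  obtain ⟨t, rfl⟩ := hd
  obtain ⟨e, l, he, hl, rfl⟩ := hF t
  induction l using Multiset.induction_on with
  | empty => exact auxG_unit' hF hH ih he (by simpa using h)
  | cons p l ihl =>
    refine ihl (fun q hq => hl q (by simp [hq])) ?_
    refine auxG_prime hF hH ih (hl p (by simp)) (auxI_mul hH hw _) ?_
    have e : w * (e * l.prod) * p = w * (e * (p ::ₘ l).prod) := by
      rw [Multiset.prod_cons]; ac_rfl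
    rwa [e]

lemma auxG_up (hF : IsFactorialMonoid F) {H : Submonoid F} (hH : IsConductorSubmonoid H)
    {a : F} {z : Multiset F} (ih : AuxIH H a) {w u y : F} (hu : IsAtomIn H u)
    (hy : AuxI H y) (hya : u * y = a) (h : AuxG H a z w) (hd : w ∣ u) : AuxG H a z u := by
  obtain ⟨v, r, hvr⟩ := aux_exists_fact hF hH y hy
  have hz2 : (u ::ₘ (v ::ₘ r)) ∈ FactorizationsOf H a := by
    rw [← hya]; exact aux_fact_cons hu hvr
  have h2 : AuxG H a (u ::ₘ (v ::ₘ r)) u :=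
    ⟨hu, ⟨y, hy, hya⟩, _, hz2, by simp, Relation.ReflTransGen.refl⟩
  obtain ⟨-, -, z3, h3, h4, h5⟩ := auxG_dvd hF hH ih h.1.auxI h2 hd
  exact ⟨hu, ⟨y, hy, hya⟩, _, hz2, by simp, (auxG_conn ih h h3 h4).trans h5.symm'⟩

lemma auxG_pair (hF : IsFactorialMonoid F) {H : Submonoid F} (hH : IsConductorSubmonoid H)
    {a : F} {z : Multiset F} (ih : AuxIH H a) {w x : F}
    (h : AuxG H a z w) (hx : IsAtomIn H x) (hd : w * x ∣ a) : AuxG H a z x := by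
  obtain ⟨y, hy⟩ := hd
  obtain ⟨e, l, he, hl, rfl⟩ := hF y
  induction l using Multiset.induction_on generalizing w with
  | empty => exact auxG_unit hF hH ih he h hx (by simpa using hy.symm)
  | cons p l ihl =>
    have hl' : ∀ q ∈ l, IsPrimeElem q := fun q hq => hl q (by simp [hq])
    rw [Multiset.prod_cons] at hy
    rcases aux_atom_prime hH h.1 (hl p (by simp)) with hat | ⟨b, c, hb, hc, hbc, hcw⟩
    · refine ihl (w := w * p) ?_ hl' (by rw [hy]; ac_rfl)
      exact auxG_up hF hH ih hat (auxI_mul hH hx.auxI (e * l.prod)) (by rw [hy]; ac_rfl) h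
        ⟨p, rfl⟩
    · have hGc := auxG_dvd hF hH ih hc.auxI h hcw
      obtain ⟨v, r, hvr⟩ := aux_exists_fact hF hH _ (auxI_mul hH hb.auxI (e * l.prod))
      have hz1 : (c ::ₘ (x ::ₘ (v ::ₘ r))) ∈ FactorizationsOf H a := by
        have := aux_fact_cons hc (aux_fact_cons hx hvr)
        have e1 : c * (x * (b * (e * l.prod))) = a := by
          calc _ = (b * c) * (x * (e * l.prod)) := by ac_rfl
            _ = a := by rw [← hbc, hy]; ac_rfl
        rwa [e1] at this
      refine ⟨hx, ⟨w * (e * (p * l.prod)), auxI_mul hH h.1.auxI _, by rw [hy]; ac_rfl⟩, _, hz1,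
        by simp, auxG_conn ih hGc hz1 (by simp)⟩

/-- extension of `AuxG` to multiples -/
def AuxG' (H : Submonoid F) (a : F) (z : Multiset F) (x : F) : Prop := ∃ w, w ∣ x ∧ AuxG H a z w

lemma auxG'_I {H : Submonoid F} (hH : IsConductorSubmonoid H)
    {a : F} {z : Multiset F} {x : F} (h : AuxG' H a z x) : AuxI H x := by
  obtain ⟨w, h1, h2⟩ := h
  exact auxI_dvd hH h2.1.auxI h1

lemma aux_exists_atom (hF : IsFactorialMonoid F) {H : Submonoid F} (hH : IsConductorSubmonoid H)
    {x : F} (hx : AuxI H x) : ∃ w, IsAtomIn H w ∧ w ∣ x := by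
  obtain ⟨v, r, h1, h2⟩ := aux_exists_fact hF hH x hx
  exact ⟨v, h1 v (by simp), ⟨r.prod, by rw [← h2, Multiset.prod_cons]⟩⟩

lemma auxG'_P1 (hF : IsFactorialMonoid F) {H : Submonoid F} (hH : IsConductorSubmonoid H)
    {a : F} {z : Multiset F} (ih : AuxIH H a) (x y : F) (hx : AuxI H x) (hy : AuxG' H a z y)
    (hd : x * y ∣ a) : AuxG' H a z x := by
  obtain ⟨w, h1, h2⟩ := hy
  obtain ⟨v, h3, h4⟩ := aux_exists_atom hF hH hx
  refine ⟨v, h4, auxG_pair hF hH ih h2 h3 ?_⟩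
  rw [mul_comm]
  exact (mul_dvd_mul h4 h1).trans hd

lemma auxG'_P2 (hF : IsFactorialMonoid F) {H : Submonoid F} (hH : IsConductorSubmonoid H)
    {a : F} {z z' : Multiset F} (ih : AuxIH H a) (hn : ¬ AuxConn H a z z') (x y : F)
    (hx : AuxG' H a z x) (hy : AuxG' H a z' y) : ¬ x * y ∣ a := by
  intro hd
  obtain ⟨w, h1, h2⟩ := hx
  obtain ⟨v, h3, h4⟩ := hy
  have h5 := auxG_pair hF hH ih h2 h4.1 ((mul_dvd_mul h1 h3).trans hd)
  obtain ⟨-, -, z1, k1, k2, k3⟩ := h4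
  exact hn ((auxG_conn ih h5 k1 k2).trans k3.symm')

lemma aux_two {H : Submonoid F} (hH : IsConductorSubmonoid H)
    {a u v : F} {r : Multiset F} (hz : (u ::ₘ v ::ₘ r) ∈ FactorizationsOf H a) :
    ∃ u1 u2, u1 * u2 = a ∧ AuxG' H a (u ::ₘ v ::ₘ r) u1 ∧ AuxG' H a (u ::ₘ v ::ₘ r) u2 := by
  have hu := hz.1 u (by simp)
  have hv := hz.1 v (by simp)
  have hp : u * (v * r.prod) = a := by rw [← hz.2]; simp
  refine ⟨u, v * r.prod, hp, ⟨u, dvd_rfl, hu, ⟨_, auxI_mul hH hv.auxI _, hp⟩, _, hz, by simp,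
    Relation.ReflTransGen.refl⟩, ⟨v, ⟨_, rfl⟩, hv, ⟨u * r.prod, auxI_mul hH hu.auxI _, ?_⟩, _, hz,
    by simp, Relation.ReflTransGen.refl⟩⟩
  rw [← hp]; ac_rfl

lemma aux_reach (hF : IsFactorialMonoid F) {H : Submonoid F} (hH : IsConductorSubmonoid H)
    {a u v u' v' : F} {r r' : Multiset F} (ih : AuxIH H a)
    (hz : (u ::ₘ v ::ₘ r) ∈ FactorizationsOf H a)
    (hz' : (u' ::ₘ v' ::ₘ r') ∈ FactorizationsOf H a)
    (hn : ¬ AuxConn H a (u ::ₘ v ::ₘ r) (u' ::ₘ v' ::ₘ r')) :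
    ∃ S T, ({S, T} : Multiset F) ∈ FactorizationsOf H a ∧
      AuxConn H a (u ::ₘ v ::ₘ r) {S, T} := by
  obtain ⟨u1, u2, hu, hu1, hu2⟩ := aux_two hH hz
  obtain ⟨v1, v2, hv, hv1, hv2⟩ := aux_two hH hz'
  obtain ⟨S, T, hS, hT, hST, hG⟩ := aux_core hF hH a _ _ (fun x h => auxG'_I hH h)
    (auxG'_P1 hF hH ih) (auxG'_P2 hF hH ih hn) u1 u2 v1 v2 hu hv hu1 hu2 hv1 hv2
    (by rintro x y ⟨w, h1, h2⟩; exact ⟨w, h1.mul_right y, h2⟩)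
  have h1 : ({S, T} : Multiset F) ∈ FactorizationsOf H a := by
    refine ⟨?_, by simp [hST]⟩
    intro t ht
    simp at ht
    rcases ht with rfl | rfl <;> assumption
  obtain ⟨w, hw, hGw⟩ := hG
  exact ⟨S, T, h1, auxG_conn ih (auxG_up hF hH ih hS hT.auxI hST hGw hw) h1 (by simp)⟩

lemma aux_prod_I {H : Submonoid F} (hH : IsConductorSubmonoid H) {s : Multiset F}
    (hs : ∀ u ∈ s, IsAtomIn H u) (h0 : s ≠ 0) : AuxI H s.prod := by
  obtain ⟨u, hu⟩ := Multiset.exists_mem_of_ne_zero h0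
  exact auxI_dvd hH (hs u hu).auxI (Multiset.dvd_prod hu)

lemma aux_prod_one {H : Submonoid F} (hH : IsConductorSubmonoid H) {s : Multiset F}
    (hs : ∀ u ∈ s, IsAtomIn H u) (h1 : s.prod = 1) : s = 0 := by
  by_contra h0
  exact auxI_nonunit hH (aux_prod_I hH hs h0) (by rw [h1]; exact isUnit_one)

lemma aux_prod_atom {H : Submonoid F} (hH : IsConductorSubmonoid H) {s : Multiset F} {u : F}
    (hu : IsAtomIn H u)
    (hs : ∀ u ∈ s, IsAtomIn H u) (h1 : s.prod = u) : s = {u} := by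
  induction s using Multiset.induction_on with
  | empty => 
    exfalso
    exact auxI_nonunit hH hu.auxI (by rw [← h1]; simp)
  | cons v r _ =>
    have hr : ∀ u ∈ r, IsAtomIn H u := fun x hx => hs x (by simp [hx])
    rw [Multiset.prod_cons] at h1
    by_cases h0 : r = 0
    · subst h0
      simp at h1
      simp [h1]
    · exact absurd h1.symm ((aux_atom_iff.1 hu).2 _ _ (hs v (by simp)).auxI (aux_prod_I hH hr h0))

lemma aux_main (hF : IsFactorialMonoid F) {H : Submonoid F} (hH : IsConductorSubmonoid H)
    (a : F) (z z' : Multiset F) (hz : z ∈ FactorizationsOf H a)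
    (hz' : z' ∈ FactorizationsOf H a) : AuxConn H a z z' := by
  obtain ⟨f, hf⟩ := aux_len hF
  induction hn : f a using Nat.strong_induction_on generalizing a z z' with
  | _ n IH =>
    have ih : AuxIH H a := by
      intro u z z' hz hz' hu hu'
      obtain ⟨r, rfl⟩ := Multiset.exists_cons_of_mem hu
      obtain ⟨r', rfl⟩ := Multiset.exists_cons_of_mem hu'
      have hua : IsAtomIn H u := hz.1 u (by simp)
      have e1 : u * r.prod = a := by rw [← hz.2]; simp
      have e2 : u * r'.prod = a := by rw [← hz'.2]; simp
      have e3 : r'.prod = r.prod := mul_left_cancel (e2.trans e1.symm)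
      rw [← e1]
      apply aux_conn_cons hua
      refine IH (f r.prod) ?_ r.prod r r' ⟨fun x hx => hz.1 x (by simp [hx]), rfl⟩
        ⟨fun x hx => hz'.1 x (by simp [hx]), e3⟩ rfl
      rw [← hn, ← e1, mul_comm]
      exact hf _ _ (auxI_nonunit hH hua.auxI)
    have shape : ∀ z ∈ FactorizationsOf H a, (z = 0 ∧ a = 1) ∨ (z = {a} ∧ IsAtomIn H a) ∨
        ∃ u v r, z = u ::ₘ v ::ₘ r := by
      intro z hz
      induction z using Multiset.induction_on with
      | empty => exact Or.inl ⟨rfl, by rw [← hz.2]; simp⟩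
      | cons u r _ =>
        induction r using Multiset.induction_on with
        | empty =>
          have : u = a := by rw [← hz.2]; simp
          subst this
          exact Or.inr (Or.inl ⟨by simp, hz.1 u (by simp)⟩)
        | cons v r _ => exact Or.inr (Or.inr ⟨u, v, r, rfl⟩)
    have small : ∀ z ∈ FactorizationsOf H a, ∀ z' ∈ FactorizationsOf H a,
        ((z = 0 ∧ a = 1) ∨ (z = {a} ∧ IsAtomIn H a)) → z = z' := by
      rintro z hz z' hz' (⟨h1, h2⟩ | ⟨h1, h2⟩)
      · rw [h1, aux_prod_one hH hz'.1 (hz'.2.trans h2)]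
      · rw [h1, aux_prod_atom hH h2 hz'.1 hz'.2]
    by_contra hc
    rcases shape z hz with h | h | ⟨u, v, r, rfl⟩
    · exact hc (small z hz z' hz' (Or.inl h) ▸ Relation.ReflTransGen.refl)
    · exact hc (small z hz z' hz' (Or.inr h) ▸ Relation.ReflTransGen.refl)
    rcases shape z' hz' with h | h | ⟨u', v', r', rfl⟩
    · exact hc (small z' hz' _ hz (Or.inl h) ▸ Relation.ReflTransGen.refl)
    · exact hc (small z' hz' _ hz (Or.inr h) ▸ Relation.ReflTransGen.refl)
    obtain ⟨S, T, h1, h2⟩ := aux_reach hF hH ih hz hz' hc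
    obtain ⟨S', T', h1', h2'⟩ := aux_reach hF hH ih hz' hz (fun h => hc h.symm')
    exact hc ((h2.tail ⟨h1, h1', aux_dist_le _ _ _ (by simp) (by simp)⟩).trans h2'.symm')

lemma aux_chain {H : Submonoid F} {a : F} {z z' : Multiset F} (hz : z ∈ FactorizationsOf H a)
    (h : AuxConn H a z z') : ∃ (k : ℕ) (c : ℕ → Multiset F), c 0 = z ∧ c k = z' ∧
        (∀ i ≤ k, c i ∈ FactorizationsOf H a) ∧
        ∀ i < k, factDist (c i) (c (i + 1)) ≤ 3 := by
  induction h with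
  | refl => exact ⟨0, fun _ => z, rfl, rfl, fun _ _ => hz, by simp⟩
  | @tail x y hxy hstep ih =>
    obtain ⟨k, c, h0, hk, h1, h2⟩ := ih
    refine ⟨k + 1, fun i => if i ≤ k then c i else y, by simp [h0], by simp, ?_, ?_⟩
    · intro i hi
      by_cases h : i ≤ k
      · simpa [h] using h1 i h
      · simpa [h] using hstep.2.1
    · intro i hi
      by_cases h : i = k
      · subst h
        simpa [hk] using hstep.2.2
      · have h3 : i ≤ k := by omega
        have h4 : i + 1 ≤ k := by omega
        simpa [h3, h4] using h2 i (by omega)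

lemma aux_step_card {H : Submonoid F} (hH : IsConductorSubmonoid H) {a : F} {x y : Multiset F}
    (h : AuxStep H a x y) : y.card ≤ x.card + 1 := by
  obtain ⟨hx, hy, hd⟩ := h
  have e1 : (x - y) + x ∩ y = x := Multiset.sub_add_inter x y
  have e2 : (y - x) + x ∩ y = y := by rw [Multiset.inter_comm]; exact Multiset.sub_add_inter y x
  have hp : (x - y).prod = (y - x).prod := by
    apply mul_right_cancel (b := (x ∩ y).prod)
    rw [← Multiset.prod_add, ← Multiset.prod_add, e1, e2, hx.2, hy.2]
  have hs : ∀ u ∈ x - y, IsAtomIn H u := fun u hu =>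
    hx.1 u (Multiset.mem_of_le (Multiset.sub_le_self x y) hu)
  have ht : ∀ u ∈ y - x, IsAtomIn H u := fun u hu =>
    hy.1 u (Multiset.mem_of_le (Multiset.sub_le_self y x) hu)
  have c1 := congrArg Multiset.card e1
  have c2 := congrArg Multiset.card e2
  rw [Multiset.card_add] at c1 c2
  have hd2 : (y - x).card ≤ 3 := (le_max_right _ _).trans hd
  by_contra hcon
  have h3 : (x - y).card = 0 ∨ (x - y).card = 1 := by omega
  rcases h3 with h3 | h3
  · rw [Multiset.card_eq_zero] at h3
    rw [h3, Multiset.prod_zero] at hp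
    have := aux_prod_one hH ht hp.symm
    rw [this] at c2
    rw [h3] at c1
    simp at c1 c2
    omega
  · obtain ⟨u, hu⟩ := Multiset.card_eq_one.1 h3
    rw [hu, Multiset.prod_singleton] at hp
    have := aux_prod_atom hH (hs u (by simp [hu])) ht hp.symm
    rw [this] at c2
    rw [hu] at c1
    simp at c1 c2
    omega

lemma aux_interval {H : Submonoid F} (hH : IsConductorSubmonoid H) {a : F} {z z' : Multiset F}
    (hz : z ∈ FactorizationsOf H a)
    (h : AuxConn H a z z') : ∀ j, z.card ≤ j → j ≤ z'.card → j ∈ LengthSetOf H a := by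
  induction h with
  | refl => exact fun j h1 h2 => ⟨z, hz, le_antisymm h1 h2⟩
  | @tail x y hxy hstep ih =>
    intro j h1 h2
    by_cases h : j ≤ x.card
    · exact ih j h1 h
    · have := aux_step_card hH hstep
      exact ⟨y, hstep.2.1, by omega⟩

end AuxConn

/-- every conductor submonoid of a factorial monoid has catenary degree at
most `3`; consequently all sets of lengths are intervals. -/
theorem stmt_14 {F : Type*} [CancelCommMonoid F] [DecidableEq F]
    (hF : IsFactorialMonoid F) (H : Submonoid F) (hH : IsConductorSubmonoid H) :
    (∀ a : F, ∀ z ∈ FactorizationsOf H a, ∀ z' ∈ FactorizationsOf H a,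
      ∃ (k : ℕ) (c : ℕ → Multiset F), c 0 = z ∧ c k = z' ∧
        (∀ i ≤ k, c i ∈ FactorizationsOf H a) ∧
        ∀ i < k, factDist (c i) (c (i + 1)) ≤ 3) ∧
    (∀ a : F, ∀ m ∈ LengthSetOf H a, ∀ n ∈ LengthSetOf H a,
      ∀ j : ℕ, m ≤ j → j ≤ n → j ∈ LengthSetOf H a) := by


  refine ⟨fun a z hz z' hz' => aux_chain hz (aux_main hF hH a z z' hz hz'), ?_⟩
  rintro a m ⟨z, hz, rfl⟩ n ⟨z', hz', rfl⟩ j h1 h2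
  exact aux_interval hH hz (aux_main hF hH a z z' hz hz') j h1 h2
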